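/- Let d ≥ 1 and ν > 0. There exist a C^∞ function h₀ : ℝ^d → ℝ that is 2π-periodic in each coordinate with ∫_{[−π,π]^d} h₀(x) dx = 0 and sup_{x ∈ ℝ^d} |∇h₀(x)| < 1, a time t₀ > 0, and a function h : [0,t₀] × ℝ^d → ℝ, 2π-periodic in each spatial coordinate and smooth, with h(0,·) = h₀, which is a classical solution of ∂_t h = ∇·((|∇h|² − 1)∇h) − νΔ²h on [0,t₀] × ℝ^d, such that sup_{x ∈ ℝ^d} |∇h(t₀,x)| > 1. -/

import Mathlib

open Real MeasureTheory Set Filter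
open scoped ENNReal

noncomputable section

/-- `ℝ^d` with the Euclidean norm. -/
abbrev Ed (d : ℕ) := EuclideanSpace ℝ (Fin d)

/-- The fundamental domain `[-π,π]^d` of the torus `𝕋^d = ℝ^d/2πℤ^d`. -/
def Qd (d : ℕ) : Set (Ed d) := {x | ∀ i, |x i| ≤ Real.pi}

/-- The partial derivative `∂_{x_j} f` of `f : ℝ^d → ℝ`. -/
noncomputable def pd {d : ℕ} (f : Ed d → ℝ) (j : Fin d) (x : Ed d) : ℝ :=
  fderiv ℝ f x (EuclideanSpace.single j 1)

/-- `|∇f|²`, the squared Euclidean norm of the spatial gradient. -/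
noncomputable def gradSq {d : ℕ} (f : Ed d → ℝ) (x : Ed d) : ℝ := ∑ j, pd f j x ^ 2

/-- `|∇f|`, the Euclidean norm of the spatial gradient. -/
noncomputable def gradNorm {d : ℕ} (f : Ed d → ℝ) (x : Ed d) : ℝ := Real.sqrt (gradSq f x)

/-- The Laplacian `Δf = Σ_j ∂_{x_j}∂_{x_j} f`. -/
noncomputable def lapl {d : ℕ} (f : Ed d → ℝ) (x : Ed d) : ℝ := ∑ j, pd (pd f j) j x

/-- The slope-selection divergence term `∇·((|∇f|²−1)∇f) = Σ_j ∂_{x_j}((|∇f|²−1)∂_{x_j}f)`. -/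
noncomputable def slopeDiv {d : ℕ} (f : Ed d → ℝ) (x : Ed d) : ℝ :=
  ∑ j, pd (fun y => (gradSq f y - 1) * pd f j y) j x

/-- `f` is `2π`-periodic in each coordinate. -/
def PeriodicSpace {d : ℕ} (f : Ed d → ℝ) : Prop :=
  ∀ (j : Fin d) (x : Ed d), f (x + (2 * Real.pi) • EuclideanSpace.single j 1) = f x

def qw (k : ℤ) : ℝ := Real.exp (-|(k:ℝ)|) / (1 + (k:ℝ)^2)

lemma qw_pos (k : ℤ) : 0 < qw k := by unfold qw; positivity
lemma qw_neg (k : ℤ) : qw (-k) = qw k := by unfold qw; push_cast; rw [abs_neg]; ring_nf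

lemma summ_sq : Summable (fun i : ℤ => 1 / (1 + (i:ℝ)^2)) := by
  have h := (Real.summable_one_div_int_pow (p := 2)).2 (by norm_num)
  refine Summable.of_norm_bounded_eventually h ?_
  have : ({0} : Set ℤ)ᶜ ∈ cofinite := (Set.finite_singleton (0:ℤ)).compl_mem_cofinite
  filter_upwards [this] with i hi
  have hi' : (i:ℝ) ≠ 0 := by simpa using hi
  rw [Real.norm_of_nonneg (by positivity)]
  apply one_div_le_one_div_of_le (by positivity); linarith

lemma summ_q (m : ℕ) : Summable (fun k : ℤ => |(k:ℝ)|^m * qw k) := by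
  have h1 : Summable (fun k : ℤ => |(k:ℝ)|^m * Real.exp (-|(k:ℝ)|)) := by
    have h := Real.summable_pow_mul_exp_neg_nat_mul m (r := 1) one_pos
    apply Summable.of_nat_of_neg <;> simpa using h
  refine Summable.of_nonneg_of_le (fun k => mul_nonneg (by positivity) (qw_pos k).le) (fun k => ?_) h1
  unfold qw
  gcongr
  apply div_le_self (by positivity)
  nlinarith [sq_nonneg (k:ℝ)]

lemma summ_q0 : Summable qw := by simpa using summ_q 0

def Cq : ℝ := 4 * ∑' i : ℤ, 1 / (1 + (i:ℝ)^2)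
lemma Cq_nonneg : 0 ≤ Cq := by
  unfold Cq
  have : 0 ≤ ∑' i : ℤ, 1 / (1 + (i:ℝ)^2) := tsum_nonneg fun i => by positivity
  positivity

lemma qw_mul (k i : ℤ) : qw i * qw (k - i) ≤
    qw k * (2 * (1 / (1 + (i:ℝ)^2)) + 2 * (1 / (1 + ((k - i : ℤ):ℝ)^2))) := by
  unfold qw
  push_cast
  set x : ℝ := (i:ℝ)
  set y : ℝ := (k:ℝ) - i with hy
  have hk : (k:ℝ) = x + y := by simp [hy, x]
  rw [hk]
  have h1 : Real.exp (-|x|) * Real.exp (-|y|) ≤ Real.exp (-|x+y|) := by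
    rw [← Real.exp_add]; apply Real.exp_le_exp.2; linarith [abs_add_le x y]
  have e1 : Real.exp (-|x|) / (1+x^2) * (Real.exp (-|y|) / (1+y^2)) = (Real.exp (-|x|) * Real.exp (-|y|)) * (1/((1+x^2)*(1+y^2))) := by
    field_simp
  have e2 : Real.exp (-|x+y|) / (1+(x+y)^2) * (2 * (1/(1+x^2)) + 2*(1/(1+y^2))) = Real.exp (-|x+y|) * ((2 * (1/(1+x^2)) + 2*(1/(1+y^2)))/(1+(x+y)^2)) := by
    field_simp
  rw [e1, e2]
  apply mul_le_mul h1 _ (by positivity) (by positivity)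
  rw [le_div_iff₀ (by positivity)]
  have : 2 * (1/(1+x^2)) + 2*(1/(1+y^2)) = (2*(1+y^2)+2*(1+x^2)) * (1/((1+x^2)*(1+y^2))) := by field_simp
  rw [this, mul_comm]
  apply mul_le_mul_of_nonneg_right _ (by positivity)
  nlinarith [sq_nonneg (x-y)]

lemma summ_shift (k : ℤ) : Summable (fun i : ℤ => 1 / (1 + ((k - i : ℤ):ℝ)^2)) :=
  (Equiv.subLeft k).summable_iff.2 summ_sq

lemma tsum_shift (k : ℤ) : (∑' i : ℤ, 1 / (1 + ((k - i : ℤ):ℝ)^2)) = ∑' i : ℤ, 1 / (1 + (i:ℝ)^2) :=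
  (Equiv.subLeft k).tsum_eq (fun i : ℤ => 1 / (1 + (i:ℝ)^2))

lemma summ_qq (k : ℤ) : Summable (fun i : ℤ => qw i * qw (k - i)) := by
  refine Summable.of_nonneg_of_le (fun i => (mul_pos (qw_pos _) (qw_pos _)).le) (fun i => qw_mul k i) ?_
  exact ((summ_sq.mul_left 2).add ((summ_shift k).mul_left 2)).mul_left _

lemma tsum_qq (k : ℤ) : ∑' i : ℤ, qw i * qw (k - i) ≤ Cq * qw k := by
  have h := (summ_qq k).tsum_le_tsum (fun i => qw_mul k i) (((summ_sq.mul_left 2).add ((summ_shift k).mul_left 2)).mul_left _)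
  refine h.trans (le_of_eq ?_)
  rw [tsum_mul_left, (summ_sq.mul_left 2).tsum_add ((summ_shift k).mul_left 2), tsum_mul_left, tsum_mul_left, tsum_shift, Cq]
  ring

def cv (a b : ℤ → ℝ) (k : ℤ) : ℝ := ∑' i, a i * b (k - i)

lemma cv_term {a b : ℤ → ℝ} {A B : ℝ} (ha : ∀ k, |a k| ≤ A * qw k) (hb : ∀ k, |b k| ≤ B * qw k) (k i : ℤ) :
    ‖a i * b (k - i)‖ ≤ A * B * (qw i * qw (k - i)) := by
  rw [norm_mul, Real.norm_eq_abs, Real.norm_eq_abs]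
  calc _ ≤ (A * qw i) * (B * qw (k-i)) := mul_le_mul (ha _) (hb _) (abs_nonneg _) ((abs_nonneg _).trans (ha _))
    _ = _ := by ring

lemma cv_summ {a b : ℤ → ℝ} {A B : ℝ} (ha : ∀ k, |a k| ≤ A * qw k) (hb : ∀ k, |b k| ≤ B * qw k) (k : ℤ) :
    Summable (fun i => a i * b (k - i)) :=
  Summable.of_norm_bounded ((summ_qq k).mul_left _) (cv_term ha hb k)

lemma bd_nonneg {a : ℤ → ℝ} {A : ℝ} (ha : ∀ k, |a k| ≤ A * qw k) : 0 ≤ A := by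
  by_contra h
  push Not at h
  have := (abs_nonneg _).trans (ha 0)
  nlinarith [qw_pos 0]

lemma cv_bd {a b : ℤ → ℝ} {A B : ℝ} (ha : ∀ k, |a k| ≤ A * qw k) (hb : ∀ k, |b k| ≤ B * qw k) (k : ℤ) :
    |cv a b k| ≤ (Cq * A * B) * qw k := by
  have := tsum_of_norm_bounded ((summ_qq k).mul_left (A*B)).hasSum (cv_term ha hb k)
  rw [Real.norm_eq_abs] at this
  refine this.trans ?_
  rw [tsum_mul_left]
  have := mul_le_mul_of_nonneg_left (tsum_qq k) (mul_nonneg (bd_nonneg ha) (bd_nonneg hb))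
  linarith

lemma cv_sub_left {a a' b : ℤ → ℝ} {A A' B : ℝ} (ha : ∀ k, |a k| ≤ A * qw k) (ha' : ∀ k, |a' k| ≤ A' * qw k)
    (hb : ∀ k, |b k| ≤ B * qw k) (k : ℤ) : cv a b k - cv a' b k = cv (fun i => a i - a' i) b k := by
  unfold cv
  rw [← (cv_summ ha hb k).tsum_sub (cv_summ ha' hb k)]
  exact tsum_congr fun i => by ring

lemma cv_sub_right {a b b' : ℤ → ℝ} {A B B' : ℝ} (ha : ∀ k, |a k| ≤ A * qw k) (hb : ∀ k, |b k| ≤ B * qw k)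
    (hb' : ∀ k, |b' k| ≤ B' * qw k) (k : ℤ) : cv a b k - cv a b' k = cv a (fun i => b i - b' i) k := by
  unfold cv
  rw [← (cv_summ ha hb k).tsum_sub (cv_summ ha hb' k)]
  exact tsum_congr fun i => by ring

lemma cv_even {a b : ℤ → ℝ} (ha : ∀ k, a (-k) = a k) (hb : ∀ k, b (-k) = b k) (k : ℤ) : cv a b (-k) = cv a b k := by
  unfold cv
  rw [← (Equiv.neg ℤ).tsum_eq]
  refine tsum_congr fun i => ?_
  simp only [Equiv.neg_apply]
  rw [ha, ← hb]; congr 2; ring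

/-- cubic nonlinearity coefficients -/
def NL (a : ℤ → ℝ) (k : ℤ) : ℝ := cv (cv a a) a k

lemma NL_bd {a : ℤ → ℝ} {A : ℝ} (ha : ∀ k, |a k| ≤ A * qw k) (k : ℤ) : |NL a k| ≤ (Cq^2 * A^3) * qw k := by
  have := cv_bd (cv_bd ha ha) ha k
  refine this.trans (le_of_eq ?_); ring

lemma NL_even {a : ℤ → ℝ} (ha : ∀ k, a (-k) = a k) (k : ℤ) : NL a (-k) = NL a k := cv_even (cv_even ha ha) ha k

lemma NL_lip {a b : ℤ → ℝ} {A D : ℝ} (ha : ∀ k, |a k| ≤ A * qw k) (hb : ∀ k, |b k| ≤ A * qw k)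
    (hd : ∀ k, |a k - b k| ≤ D * qw k) (k : ℤ) : |NL a k - NL b k| ≤ (3 * Cq^2 * A^2 * D) * qw k := by
  have e : NL a k - NL b k = cv (fun i => cv a a i - cv b b i) a k + cv (cv b b) (fun i => a i - b i) k := by
    rw [← cv_sub_left (cv_bd ha ha) (cv_bd hb hb) ha, ← cv_sub_right (cv_bd hb hb) ha hb]
    unfold NL; ring
  have h2 : ∀ k, |cv a a k - cv b b k| ≤ (2 * Cq * A * D) * qw k := by
    intro k
    have e : cv a a k - cv b b k = cv (fun i => a i - b i) a k + cv b (fun i => a i - b i) k := by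
      rw [← cv_sub_left ha hb ha, ← cv_sub_right hb ha hb]; ring
    rw [e]
    refine (abs_add_le _ _).trans ?_
    have := cv_bd hd ha k
    have := cv_bd hb hd k
    linarith
  rw [e]
  refine (abs_add_le _ _).trans ?_
  have h3 := cv_bd h2 ha k
  have h4 := cv_bd (cv_bd hb hb) hd k
  refine (add_le_add h3 h4).trans (le_of_eq ?_); ring

lemma cv_cont {a b : ℤ → ℝ → ℝ} {A B : ℝ} (ha : ∀ k t, |a k t| ≤ A * qw k) (hb : ∀ k t, |b k t| ≤ B * qw k)
    (hac : ∀ k, Continuous (a k)) (hbc : ∀ k, Continuous (b k)) (k : ℤ) :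
    Continuous (fun t => cv (fun i => a i t) (fun i => b i t) k) := by
  unfold cv
  refine continuous_tsum (fun i => (hac i).mul (hbc (k-i))) ((summ_qq k).mul_left (A*B)) (fun i t => ?_)
  exact cv_term (a := fun i => a i t) (b := fun i => b i t) (fun k => ha k t) (fun k => hb k t) k i

lemma NL_cont {a : ℤ → ℝ → ℝ} {A : ℝ} (ha : ∀ k t, |a k t| ≤ A * qw k)
    (hac : ∀ k, Continuous (a k)) (k : ℤ) : Continuous (fun t => NL (fun i => a i t) k) := by
  unfold NL
  exact cv_cont (a := fun k t => cv (fun i => a i t) (fun i => a i t) k)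
    (fun k t => cv_bd (fun k => ha k t) (fun k => ha k t) k) ha (cv_cont ha ha hac hac) hac k

def Cs (a : ℤ → ℝ) (x : ℝ) : ℝ := ∑' k : ℤ, a k * Real.cos (k * x)

lemma bd_summ {a : ℤ → ℝ} {A : ℝ} (ha : ∀ k, |a k| ≤ A * qw k) (f : ℤ → ℝ) (hf : ∀ k, |f k| ≤ 1) :
    Summable (fun k => ‖a k * f k‖) := by
  refine Summable.of_nonneg_of_le (fun _ => norm_nonneg _) (fun k => ?_) (summ_q0.mul_left A)
  rw [norm_mul, Real.norm_eq_abs, Real.norm_eq_abs]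
  calc _ ≤ |a k| * 1 := by gcongr; exact hf k
    _ ≤ _ := by simpa using ha k

lemma Cs_mul {a b : ℤ → ℝ} {A B : ℝ} (ha : ∀ k, |a k| ≤ A * qw k) (hb : ∀ k, |b k| ≤ B * qw k)
    (hae : ∀ k, a (-k) = a k) (x : ℝ) : Cs a x * Cs b x = Cs (cv a b) x := by
  have hc : ∀ k : ℤ, |Real.cos (k*x)| ≤ 1 := fun k => Real.abs_cos_le_one _
  have hs : ∀ k : ℤ, |Real.sin (k*x)| ≤ 1 := fun k => Real.abs_sin_le_one _
  have S0 : ∑' k : ℤ, a k * Real.sin (k*x) = 0 := by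
    have : ∑' k : ℤ, a k * Real.sin (k*x) = - ∑' k : ℤ, a k * Real.sin (k*x) := by
      conv_lhs => rw [← (Equiv.neg ℤ).tsum_eq]
      rw [← tsum_neg]
      refine tsum_congr fun i => ?_
      simp [hae]
    linarith
  have s1 := bd_summ ha _ hc
  have s2 := bd_summ hb _ hc
  have s3 := bd_summ ha _ hs
  have s4 := bd_summ hb _ hs
  have e1 := tsum_mul_tsum_of_summable_norm s1 s2
  have e2 := tsum_mul_tsum_of_summable_norm s3 s4
  rw [S0, zero_mul] at e2
  have t1 := summable_mul_of_summable_norm s1 s2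
  have t2 := summable_mul_of_summable_norm s3 s4
  have e3 : Cs a x * Cs b x = ∑' p : ℤ × ℤ, a p.1 * b p.2 * Real.cos (((p.1 + p.2 : ℤ):ℝ) * x) := by
    unfold Cs
    rw [e1, ← sub_zero (∑' _, _), e2, ← t1.tsum_sub t2]
    refine tsum_congr fun p => ?_
    push_cast
    rw [add_mul, Real.cos_add]; ring
  have t3 : Summable (fun p : ℤ × ℤ => a p.1 * b p.2 * Real.cos (((p.1 + p.2 : ℤ):ℝ) * x)) := by
    refine (t1.sub t2).congr fun p => ?_
    push_cast
    rw [add_mul, Real.cos_add]; ring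
  let e : ℤ × ℤ ≃ ℤ × ℤ := ⟨fun p => (p.2, p.1 - p.2), fun p => (p.1 + p.2, p.1), fun p => by ext <;> simp, fun p => by ext <;> simp⟩
  rw [e3, ← e.tsum_eq]
  have t4 := e.summable_iff.2 t3
  have := t4.tsum_prod
  simp only [Function.comp_def] at this
  rw [this]
  unfold Cs cv
  refine tsum_congr fun k => ?_
  rw [← tsum_mul_right]
  refine tsum_congr fun i => ?_
  simp [e]

lemma Cs_NL {a : ℤ → ℝ} {A : ℝ} (ha : ∀ k, |a k| ≤ A * qw k)
    (hae : ∀ k, a (-k) = a k) (x : ℝ) : Cs (NL a) x = Cs a x ^ 3 := by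
  unfold NL
  rw [← Cs_mul (cv_bd ha ha) ha (cv_even hae hae), ← Cs_mul ha ha hae]; ring

def Duh (k : ℤ) (F : ℝ → ℝ) (t : ℝ) : ℝ :=
  Real.exp (-(k:ℝ)^4 * max t 0) * ∫ s in (0:ℝ)..(max t 0), Real.exp ((k:ℝ)^4 * s) * F s

lemma Duh_cont (k : ℤ) {F : ℝ → ℝ} (hF : Continuous F) : Continuous (Duh k F) := by
  unfold Duh
  have h1 : Continuous (fun s => Real.exp ((k:ℝ)^4 * s) * F s) := by fun_prop
  have h2 : Continuous (fun u => ∫ s in (0:ℝ)..u, Real.exp ((k:ℝ)^4 * s) * F s) :=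
    intervalIntegral.continuous_primitive (fun a b => h1.intervalIntegrable a b) 0
  have h3 : Continuous (fun t : ℝ => max t 0) := by fun_prop
  exact (by fun_prop : Continuous fun t : ℝ => Real.exp (-(k:ℝ)^4 * max t 0)).mul (h2.comp h3)

lemma Duh_sub (k : ℤ) {F G : ℝ → ℝ} (hF : Continuous F) (hG : Continuous G) (t : ℝ) :
    Duh k F t - Duh k G t = Duh k (fun s => F s - G s) t := by
  unfold Duh
  rw [← mul_sub, ← intervalIntegral.integral_sub]
  · congr 2; ext s; ring
  · exact Continuous.intervalIntegrable (by fun_prop) _ _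
  · exact Continuous.intervalIntegrable (by fun_prop) _ _

lemma Duh_bd (k : ℤ) {F : ℝ → ℝ} {B : ℝ} (hB : ∀ s, |F s| ≤ B) (t : ℝ) :
    (k:ℝ)^2 * |Duh k F t| ≤ B := by
  have hB0 : 0 ≤ B := (abs_nonneg _).trans (hB 0)
  by_cases hk : k = 0
  · subst hk; simpa using hB0
  have hk1 : (1:ℝ) ≤ (k:ℝ)^2 := by
    have : (1:ℤ) ≤ k^2 := by have := sq_pos_of_ne_zero hk; omega
    exact_mod_cast this
  have hk4 : (0:ℝ) < (k:ℝ)^4 := by nlinarith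
  unfold Duh
  set τ := max t 0
  have hτ : 0 ≤ τ := le_max_right _ _
  have h1 : |∫ s in (0:ℝ)..τ, Real.exp ((k:ℝ)^4 * s) * F s| ≤ ∫ s in (0:ℝ)..τ, Real.exp ((k:ℝ)^4 * s) * B := by
    rw [← Real.norm_eq_abs]
    refine intervalIntegral.norm_integral_le_of_norm_le hτ ?_ (Continuous.intervalIntegrable (by fun_prop) _ _)
    refine Filter.Eventually.of_forall fun s _ => ?_
    rw [norm_mul, Real.norm_eq_abs, Real.norm_eq_abs, abs_of_pos (Real.exp_pos _)]
    gcongr; exact hB s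
  have h2 : ∫ s in (0:ℝ)..τ, Real.exp ((k:ℝ)^4 * s) * B = B * ((Real.exp ((k:ℝ)^4 * τ) - 1) / (k:ℝ)^4) := by
    rw [intervalIntegral.integral_mul_const, intervalIntegral.integral_comp_mul_left (fun y => Real.exp y) hk4.ne', integral_exp]; simp only [smul_eq_mul, mul_zero, Real.exp_zero]
    ring
  rw [h2] at h1
  rw [abs_mul, abs_of_pos (Real.exp_pos _)]
  have e3 : Real.exp (-(k:ℝ)^4 * τ) * Real.exp ((k:ℝ)^4 * τ) = 1 := by
    rw [← Real.exp_add]; simp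
  calc _ ≤ (k:ℝ)^2 * (Real.exp (-(k:ℝ)^4 * τ) * (B * ((Real.exp ((k:ℝ)^4 * τ) - 1) / (k:ℝ)^4))) := by gcongr
    _ = (k:ℝ)^2 / (k:ℝ)^4 * B * (Real.exp (-(k:ℝ)^4 * τ) * Real.exp ((k:ℝ)^4 * τ) - Real.exp (-(k:ℝ)^4 * τ)) := by ring
    _ ≤ 1 * B * 1 := by
      rw [e3]
      have : 1 - Real.exp (-(k:ℝ)^4 * τ) ≤ 1 := by linarith [Real.exp_pos (-(k:ℝ)^4 * τ)]
      have h0 : 0 ≤ 1 - Real.exp (-(k:ℝ)^4 * τ) := by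
        have : Real.exp (-(k:ℝ)^4 * τ) ≤ 1 := Real.exp_le_one_iff.2 (by nlinarith)
        linarith
      have : (k:ℝ)^2/(k:ℝ)^4 ≤ 1 := by rw [div_le_one hk4]; nlinarith
      gcongr
    _ = B := by ring

lemma Duh_deriv (k : ℤ) {F : ℝ → ℝ} (hF : Continuous F) {t : ℝ} (ht : 0 < t) :
    HasDerivAt (Duh k F) (-(k:ℝ)^4 * Duh k F t + F t) t := by
  have h1 : Continuous (fun s => Real.exp ((k:ℝ)^4 * s) * F s) := by fun_prop
  have hI : HasDerivAt (fun u => ∫ s in (0:ℝ)..u, Real.exp ((k:ℝ)^4 * s) * F s) (Real.exp ((k:ℝ)^4 * t) * F t) t :=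
    (h1.integral_hasStrictDerivAt 0 t).hasDerivAt
  have hE : HasDerivAt (fun u => Real.exp (-(k:ℝ)^4 * u)) (Real.exp (-(k:ℝ)^4 * t) * (-(k:ℝ)^4)) t := by
    have := ((hasDerivAt_id t).const_mul (-(k:ℝ)^4)).exp
    simpa using this
  have hm := hE.mul hI
  have hev : Duh k F =ᶠ[nhds t] fun u => Real.exp (-(k:ℝ)^4 * u) * ∫ s in (0:ℝ)..u, Real.exp ((k:ℝ)^4 * s) * F s := by
    filter_upwards [lt_mem_nhds ht] with u hu
    unfold Duh; rw [max_eq_left hu.le]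
  refine (hm.congr_of_eventuallyEq hev).congr_deriv ?_
  rw [hev.self_of_nhds]
  have e3 : Real.exp (-(k:ℝ)^4 * t) * Real.exp ((k:ℝ)^4 * t) = 1 := by
    rw [← Real.exp_add]; simp
  linear_combination F t * e3

open BoundedContinuousFunction

abbrev XX := BoundedContinuousFunction (ℤ × ℝ) ℝ

def cof (b : XX) (k : ℤ) (t : ℝ) : ℝ := qw k * b (k, t)

lemma cof_bd (b : XX) (k : ℤ) (t : ℝ) : |cof b k t| ≤ ‖b‖ * qw k := by
  unfold cof
  rw [abs_mul, abs_of_pos (qw_pos k), mul_comm]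
  exact mul_le_mul_of_nonneg_right (b.norm_coe_le_norm (k,t)) (qw_pos k).le

lemma cof_cont (b : XX) (k : ℤ) : Continuous (cof b k) := by
  unfold cof
  have := b.continuous
  fun_prop

def FF (b : XX) (k : ℤ) (t : ℝ) : ℝ := NL (fun i => cof b i t) k - cof b k t

lemma FF_cont (b : XX) (k : ℤ) : Continuous (FF b k) :=
  (NL_cont (cof_bd b) (cof_cont b) k).sub (cof_cont b k)

lemma FF_bd (b : XX) {R : ℝ} (hR : ‖b‖ ≤ R) (k : ℤ) (t : ℝ) : |FF b k t| ≤ (Cq^2*R^3+R) * qw k := by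
  have hb : ∀ k, |cof b k t| ≤ R * qw k := fun k =>
    (cof_bd b k t).trans (mul_le_mul_of_nonneg_right hR (qw_pos k).le)
  have := NL_bd (a := fun i => cof b i t) hb k
  unfold FF
  refine (abs_sub _ _).trans ?_
  linarith [hb k]

lemma FF_lip (b c : XX) {R : ℝ} (hb : ‖b‖ ≤ R) (hc : ‖c‖ ≤ R) (k : ℤ) (t : ℝ) :
    |FF b k t - FF c k t| ≤ ((3*Cq^2*R^2+1) * ‖b - c‖) * qw k := by
  have hb : ∀ k, |cof b k t| ≤ R * qw k := fun k =>
    (cof_bd b k t).trans (mul_le_mul_of_nonneg_right hb (qw_pos k).le)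
  have hc : ∀ k, |cof c k t| ≤ R * qw k := fun k =>
    (cof_bd c k t).trans (mul_le_mul_of_nonneg_right hc (qw_pos k).le)
  have hd : ∀ k, |cof b k t - cof c k t| ≤ ‖b - c‖ * qw k := fun k => by
    have := cof_bd (b - c) k t
    rwa [show cof (b-c) k t = cof b k t - cof c k t by simp [cof]; ring] at this
  have := NL_lip (a := fun i => cof b i t) (b := fun i => cof c i t) hb hc hd k
  unfold FF
  rw [show ∀ x y z w : ℝ, (x - y) - (z - w) = (x - z) - (y - w) by intros; ring]
  refine (abs_sub _ _).trans ?_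
  linarith [hd k]

lemma Phi_bd (ε : ℝ) (hε : 0 ≤ ε) (b : XX) (k : ℤ) (t : ℝ) :
    |ε * (k:ℝ)^2 * Duh k (FF b k) t / qw k| ≤ ε * (Cq^2*‖b‖^3+‖b‖) := by
  have := Duh_bd k (fun s => FF_bd b le_rfl k s) t
  rw [abs_div, abs_mul, abs_mul, abs_of_nonneg hε, abs_of_nonneg (sq_nonneg (k:ℝ)), abs_of_pos (qw_pos k), div_le_iff₀ (qw_pos k)]
  calc _ = ε * ((k:ℝ)^2 * |Duh k (FF b k) t|) := by ring
    _ ≤ ε * ((Cq^2*‖b‖^3+‖b‖) * qw k) := by gcongr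
    _ = _ := by ring

def Phi (g : XX) (ε : ℝ) (hε : 0 ≤ ε) (b : XX) : XX :=
  g - BoundedContinuousFunction.ofNormedAddCommGroup
    (fun p : ℤ × ℝ => ε * (p.1:ℝ)^2 * Duh p.1 (FF b p.1) p.2 / qw p.1)
    (by
      rw [continuous_prod_of_discrete_left]
      intro k
      have h : Continuous fun t => ε * (k:ℝ)^2 * Duh k (FF b k) t / qw k :=
        ((Duh_cont k (FF_cont b k)).const_mul (ε * (k:ℝ)^2)).div_const (qw k)
      exact h)
    (ε * (Cq^2*‖b‖^3+‖b‖))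
    (fun p => Phi_bd ε hε b p.1 p.2)

lemma Phi_apply (g : XX) (ε : ℝ) (hε : 0 ≤ ε) (b : XX) (k : ℤ) (t : ℝ) :
    Phi g ε hε b (k,t) = g (k,t) - ε * (k:ℝ)^2 * Duh k (FF b k) t / qw k := rfl

lemma exists_fix (g : XX) (hg : ∀ k t, g (-k,t) = g (k,t)) (ε : ℝ) (hε : 0 ≤ ε) (R : ℝ)
    (h1 : ‖g‖ + ε * (Cq^2*R^3+R) ≤ R) (h2 : ε * (3*Cq^2*R^2+1) ≤ 1/2) :
    ∃ b : XX, ‖b‖ ≤ R ∧ (∀ k t, b (-k,t) = b (k,t)) ∧ ∀ k t, b (k,t) = g (k,t) - ε * (k:ℝ)^2 * Duh k (FF b k) t / qw k := by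
  have hR : 0 ≤ R := by
    by_contra h
    push Not at h
    have e : 0 ≤ ε * (3*Cq^2*R^2+1) := by positivity
    have : Cq^2*R^3 + R = R * (Cq^2*R^2+1) := by ring
    have h3 : ε * (Cq^2*R^2+1) ≤ 1/2 := by
      refine le_trans ?_ h2
      apply mul_le_mul_of_nonneg_left _ hε
      nlinarith [sq_nonneg (Cq*R)]
    have := norm_nonneg g
    nlinarith
  let s : Set XX := {b | ‖b‖ ≤ R ∧ ∀ k t, b (-k,t) = b (k,t)}
  have hs : IsClosed s := by
    have : s = {b | ‖b‖ ≤ R} ∩ ⋂ k : ℤ, ⋂ t : ℝ, {b : XX | b (-k,t) = b (k,t)} := by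
      ext b; simp [s]
    rw [this]
    refine (isClosed_le continuous_norm continuous_const).inter (isClosed_iInter fun k => isClosed_iInter fun t => ?_)
    exact isClosed_eq (continuous_eval_const _) (continuous_eval_const _)
  have hmap : MapsTo (Phi g ε hε) s s := by
    intro b hb
    refine ⟨?_, ?_⟩
    · rw [BoundedContinuousFunction.norm_le hR]
      rintro ⟨k,t⟩
      rw [Phi_apply]
      refine (norm_sub_le _ _).trans ?_
      have a1 := g.norm_coe_le_norm (k,t)
      have a2 := Phi_bd ε hε b k t
      have a3 : ε * (Cq^2*‖b‖^3+‖b‖) ≤ ε * (Cq^2*R^3+R) := by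
        have := hb.1
        gcongr
      rw [Real.norm_eq_abs (_/_)]
      linarith
    · intro k t
      rw [Phi_apply, Phi_apply, hg, qw_neg]
      have : FF b (-k) = FF b k := by
        have hc : ∀ k t, cof b (-k) t = cof b k t := by
          intro k t; unfold cof; rw [qw_neg, hb.2]
        ext s
        unfold FF
        rw [NL_even (fun k => hc k s), hc]
      rw [this]
      simp [Duh, Even.neg_pow (by decide : Even 4)]
  have hcon : ContractingWith (1/2 : NNReal) (hmap.restrict (Phi g ε hε) s s) := by
    refine ⟨by rw [← NNReal.coe_lt_coe]; norm_num, LipschitzWith.of_dist_le_mul ?_⟩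
    rintro ⟨b, hb⟩ ⟨c, hc⟩
    rw [Subtype.dist_eq, Subtype.dist_eq]
    simp only [MapsTo.val_restrict_apply]
    rw [dist_eq_norm, dist_eq_norm, BoundedContinuousFunction.norm_le (by positivity)]
    rintro ⟨k,t⟩
    rw [BoundedContinuousFunction.sub_apply, Phi_apply, Phi_apply]
    have e : g (k,t) - ε * (k:ℝ)^2 * Duh k (FF b k) t / qw k - (g (k,t) - ε * (k:ℝ)^2 * Duh k (FF c k) t / qw k)
       = - (ε * ((k:ℝ)^2 * Duh k (fun s => FF b k s - FF c k s) t) / qw k) := by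
      rw [← Duh_sub k (FF_cont b k) (FF_cont c k)]; ring
    rw [e, norm_neg, norm_div, norm_mul, norm_mul, Real.norm_eq_abs, Real.norm_eq_abs, Real.norm_eq_abs, Real.norm_eq_abs, abs_of_nonneg hε, abs_of_pos (qw_pos k), abs_of_nonneg (sq_nonneg (k:ℝ)), div_le_iff₀ (qw_pos k)]
    have := Duh_bd k (fun s => FF_lip b c hb.1 hc.1 k s) t
    calc _ ≤ ε * (((3*Cq^2*R^2+1) * ‖b - c‖) * qw k) := by gcongr
      _ = (ε * (3*Cq^2*R^2+1)) * (‖b - c‖ * qw k) := by ring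
      _ ≤ 1/2 * (‖b - c‖ * qw k) := by
        have := qw_pos k
        gcongr
      _ = _ := by push_cast; ring
  obtain ⟨b, hb, hfix, -⟩ := ContractingWith.exists_fixedPoint' hs.isComplete hmap hcon
    (x := 0) (by simp [s, hR]) (edist_ne_top _ _)
  refine ⟨b, hb.1, hb.2, fun k t => ?_⟩
  rw [← Phi_apply g ε hε, hfix]

def W (θ : ℝ) (m : ℕ) (c : ℤ → ℝ → ℝ) (p : ℝ × ℝ) : ℝ :=
  ∑' k : ℤ, (k:ℝ)^m * c k p.1 * Real.cos (k * p.2 + θ + m * (π/2))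

def Rapid (u : ℤ → ℝ) : Prop := ∀ m : ℕ, Summable fun k : ℤ => |(k:ℝ)|^m * u k

lemma rapid_q (A : ℝ) : Rapid (fun k => A * qw k) := fun m => by
  refine ((summ_q m).mul_left A).congr fun k => by ring

lemma rapid_mul {u : ℤ → ℝ} (hu : Rapid u) (j : ℕ) : Rapid (fun k => |(k:ℝ)|^j * u k) := fun m => by
  refine (hu (m+j)).congr fun k => by ring

lemma rapid_add {u v : ℤ → ℝ} (hu : Rapid u) (hv : Rapid v) : Rapid (fun k => u k + v k) := fun m => by
  refine ((hu m).add (hv m)).congr fun k => by ring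

lemma W_term {u : ℤ → ℝ} (θ : ℝ) (m : ℕ) {k : ℤ} {z : ℝ} (hc : |z| ≤ u k) (y : ℝ) :
    ‖(k:ℝ)^m * z * Real.cos y‖ ≤ |(k:ℝ)|^m * u k := by
  rw [norm_mul, norm_mul, norm_pow, Real.norm_eq_abs, Real.norm_eq_abs, Real.norm_eq_abs]
  have h0 : 0 ≤ u k := (abs_nonneg _).trans hc
  calc _ ≤ |(k:ℝ)|^m * u k * 1 := by gcongr; exact Real.abs_cos_le_one _
    _ = _ := by ring

lemma W_summ {u : ℤ → ℝ} (hu : Rapid u) (θ : ℝ) (m : ℕ) {c : ℤ → ℝ → ℝ} {p : ℝ × ℝ} (hc : ∀ k, |c k p.1| ≤ u k) :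
    Summable (fun k : ℤ => (k:ℝ)^m * c k p.1 * Real.cos (k * p.2 + θ + m * (π/2))) :=
  Summable.of_norm_bounded (hu m) (fun k => W_term θ m (hc k) _)

lemma W_cont {u : ℤ → ℝ} (hu : Rapid u) (θ : ℝ) (m : ℕ) {c : ℤ → ℝ → ℝ} (hc : ∀ k t, |c k t| ≤ u k)
    (hcc : ∀ k, Continuous (c k)) : Continuous (W θ m c) := by
  unfold W
  refine continuous_tsum (fun k => ?_) (hu m) (fun k p => W_term θ m (hc k _) _)
  have := hcc k
  fun_prop

lemma W_dx {u : ℤ → ℝ} (hu : Rapid u) (θ : ℝ) (m : ℕ) {c : ℤ → ℝ → ℝ} {t : ℝ} (hc : ∀ k, |c k t| ≤ u k) (x : ℝ) :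
    HasDerivAt (fun y => W θ m c (t, y)) (W θ (m+1) c (t, x)) x := by
  unfold W
  refine hasDerivAt_tsum (hu (m+1)) (g := fun (k:ℤ) y => (k:ℝ)^m * c k t * Real.cos (k * y + θ + m * (π/2)))
    (g' := fun (k:ℤ) y => (k:ℝ)^(m+1) * c k t * Real.cos (k * y + θ + (m+1:ℕ) * (π/2)))
    (fun k y => ?_) (fun k y => W_term θ (m+1) (hc k) _) (y₀ := 0) ?_ x
  · have h1 : HasDerivAt (fun y : ℝ => (k:ℝ) * y + θ + m * (π/2)) (k:ℝ) y := by
      simpa using (((hasDerivAt_id y).const_mul (k:ℝ)).add_const θ).add_const (m * (π/2))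
    refine (h1.cos.const_mul ((k:ℝ)^m * c k t)).congr_deriv ?_
    have : (k:ℝ) * y + θ + (m+1:ℕ) * (π/2) = ((k:ℝ) * y + θ + m * (π/2)) + π/2 := by push_cast; ring
    rw [this, Real.cos_add_pi_div_two]; ring
  · exact W_summ (p := (t,0)) hu θ m hc

lemma W_dt {u u' : ℤ → ℝ} (hu : Rapid u) (hu' : Rapid u') (θ : ℝ) (m : ℕ) {c c' : ℤ → ℝ → ℝ}
    (hc : ∀ k t, |c k t| ≤ u k) (hc' : ∀ k t, |c' k t| ≤ u' k)
    (hd : ∀ k t, 0 < t → HasDerivAt (c k) (c' k t) t) (x : ℝ) {t : ℝ} (ht : 0 < t) :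
    HasDerivAt (fun s => W θ m c (s, x)) (W θ m c' (t, x)) t := by
  unfold W
  refine hasDerivAt_tsum_of_isPreconnected (hu' m) (t := Ioi 0) isOpen_Ioi isPreconnected_Ioi
    (g := fun (k:ℤ) s => (k:ℝ)^m * c k s * Real.cos (k * x + θ + m * (π/2)))
    (g' := fun (k:ℤ) s => (k:ℝ)^m * c' k s * Real.cos (k * x + θ + m * (π/2)))
    (fun k s hs => ?_) (fun k s _ => W_term θ m (hc' k s) _) (y₀ := 1) (by simp) ?_ ht
  · exact ((hd k s hs).const_mul _).mul_const _
  · exact W_summ (p := (1,x)) hu θ m (fun k => hc k _)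

/-- smoothness from closed system of partial derivatives -/
lemma smooth_of_system (H G : ℕ → ℝ × ℝ → ℝ) (ε : ℝ) (hH : ∀ m, Continuous (H m))
    (hHx : ∀ m t x, HasDerivAt (fun y => H m (t,y)) (H (m+1) (t,x)) x)
    (hGx : ∀ m t x, HasDerivAt (fun y => G m (t,y)) (G (m+1) (t,x)) x)
    (hG0 : ∀ p, G 0 p = H 1 p ^ 3)
    (hHt : ∀ m t x, 0 < t → HasDerivAt (fun s => H m (s,x)) (-H (m+4) (t,x) + ε * (G (m+1) (t,x) - H (m+2) (t,x))) t)
    (m : ℕ) : ContDiffOn ℝ (⊤ : ℕ∞) (H m) (Ioi 0 ×ˢ univ) := by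
  let S : Subalgebra ℝ (ℝ × ℝ → ℝ) := Algebra.adjoin ℝ (range H)
  have hHS : ∀ m, H m ∈ S := fun m => Algebra.subset_adjoin ⟨m, rfl⟩
  have hSx : ∀ f ∈ S, ∃ g ∈ S, ∀ t x, HasDerivAt (fun y => f (t,y)) (g (t,x)) x := by
    intro f hf
    induction hf using Algebra.adjoin_induction with
    | mem f hf =>
      obtain ⟨m, rfl⟩ := hf
      exact ⟨H (m+1), hHS _, hHx m⟩
    | algebraMap r =>
      exact ⟨0, S.zero_mem, fun t x => by simpa using hasDerivAt_const x r⟩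
    | add f g _ _ hf hg =>
      obtain ⟨f', hf', hf⟩ := hf
      obtain ⟨g', hg', hg⟩ := hg
      exact ⟨f' + g', S.add_mem hf' hg', fun t x => (hf t x).add (hg t x)⟩
    | mul f g hfS hgS hf hg =>
      obtain ⟨f', hf', hf⟩ := hf
      obtain ⟨g', hg', hg⟩ := hg
      exact ⟨f' * g + f * g', S.add_mem (S.mul_mem hf' hgS) (S.mul_mem hfS hg'), fun t x => (hf t x).mul (hg t x)⟩
  have hGS : ∀ m, G m ∈ S := by
    intro m
    induction m with
    | zero =>
      have : G 0 = (H 1)^3 := by ext p; simp [hG0]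
      rw [this]; exact S.pow_mem (hHS 1) 3
    | succ m ih =>
      obtain ⟨g, hg, hg'⟩ := hSx _ ih
      have : G (m+1) = g := by
        ext ⟨t,x⟩
        exact (hGx m t x).unique (hg' t x)
      rwa [this]
  have hO : IsOpen (Ioi (0:ℝ) ×ˢ (univ : Set ℝ)) := isOpen_Ioi.prod isOpen_univ
  have key : ∀ n : ℕ, ∀ m, ContDiffOn ℝ n (H m) (Ioi 0 ×ˢ univ) := by
    intro n
    induction n with
    | zero => intro m; simpa using (hH m).continuousOn
    | succ n ih =>
      have hSn : ∀ f ∈ S, ContDiffOn ℝ n f (Ioi 0 ×ˢ univ) := by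
        intro f hf
        induction hf using Algebra.adjoin_induction with
        | mem f hf => obtain ⟨m, rfl⟩ := hf; exact ih m
        | algebraMap r => exact contDiffOn_const
        | add f g _ _ hf hg => exact hf.add hg
        | mul f g _ _ hf hg => exact hf.mul hg
      have hSc : ∀ f ∈ S, Continuous f := by
        intro f hf
        induction hf using Algebra.adjoin_induction with
        | mem f hf => obtain ⟨m, rfl⟩ := hf; exact hH m
        | algebraMap r => exact continuous_const
        | add f g _ _ hf hg => exact hf.add hg
        | mul f g _ _ hf hg => exact hf.mul hg
      intro m
      let Ht : ℝ × ℝ → ℝ := - H (m+4) + ε • (G (m+1) - H (m+2))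
      have hHtS : Ht ∈ S := S.add_mem (S.neg_mem (hHS _)) (S.smul_mem (S.sub_mem (hGS _) (hHS _)) ε)
      let L : ℝ × ℝ → (ℝ × ℝ →L[ℝ] ℝ) := fun p =>
        (Ht p • (1 : ℝ →L[ℝ] ℝ)).coprod (H (m+1) p • (1 : ℝ →L[ℝ] ℝ))
      have hL : L = fun p => Ht p • ContinuousLinearMap.fst ℝ ℝ ℝ + H (m+1) p • ContinuousLinearMap.snd ℝ ℝ ℝ := by
        ext p <;> simp [L]
      have hfd : ∀ p ∈ Ioi (0:ℝ) ×ˢ (univ : Set ℝ), HasFDerivAt (H m) (L p) p := by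
        intro p hp
        have := hasStrictFDerivAt_uncurry_coprod (𝕜 := ℝ) (u := p) (f := fun t x => H m (t,x))
          (f₁ := fun t x => Ht (t,x) • (1 : ℝ →L[ℝ] ℝ)) (f₂ := fun t x => H (m+1) (t,x) • (1 : ℝ →L[ℝ] ℝ)) ?_ ?_ ?_ ?_
        · exact this.hasFDerivAt
        · filter_upwards [hO.mem_nhds hp] with v hv
          have := (hHt m v.1 v.2 hv.1).hasFDerivAt
          convert! this using 1
          ext; simp [Function.HasUncurry.uncurry, Ht]
        · filter_upwards with v
          have := (hHx m v.1 v.2).hasFDerivAt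
          convert! this using 1
          ext; simp [Function.HasUncurry.uncurry]
        · have := hSc _ hHtS
          exact (this.smul continuous_const).continuousAt
        · exact ((hH (m+1)).smul continuous_const).continuousAt
      have : ((n+1 : ℕ) : WithTop ℕ∞) = (n : WithTop ℕ∞) + 1 := by push_cast; rfl
      rw [this, contDiffOn_succ_iff_fderiv_of_isOpen hO]
      refine ⟨fun p hp => (hfd p hp).differentiableAt.differentiableWithinAt, ?_, ?_⟩
      · intro h; exact absurd h (by simp)
      · have h1 : ContDiffOn ℝ n L (Ioi 0 ×ˢ univ) := by
          rw [hL]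
          exact ((hSn _ hHtS).smul contDiffOn_const).add ((ih (m+1)).smul contDiffOn_const)
        exact h1.congr fun p hp => (hfd p hp).fderiv
  exact contDiffOn_infty.2 (fun n => key n m)

def al (k : ℤ) : ℝ := if k.natAbs = 1 then 11/20 else if k.natAbs = 3 then -11/180 else 0

def gl (k : ℤ) (t : ℝ) : ℝ := al k * Real.exp (-(k:ℝ)^4 * (max t 0 - 1))

lemma al_neg (k : ℤ) : al (-k) = al k := by simp [al]

lemma gl_neg (k : ℤ) (t : ℝ) : gl (-k) t = gl k t := by
  unfold gl; rw [al_neg]; push_cast; rw [Even.neg_pow (by decide : Even 4)]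

lemma al_cases (k : ℤ) : al k = 0 ∨ k = 1 ∨ k = -1 ∨ k = 3 ∨ k = -3 := by
  unfold al
  split_ifs with h1 h2
  · omega
  · omega
  · simp

lemma al_abs (k : ℤ) : |al k| ≤ 1 := by
  unfold al
  split_ifs <;> norm_num [abs_of_nonneg, abs_of_neg]

lemma gl_bd : ∃ C : ℝ, ∀ k t, ‖gl k t / qw k‖ ≤ C := by
  refine ⟨Real.exp 1 / qw 1 + Real.exp 81 / qw 3, fun k t => ?_⟩
  have q1 := qw_pos 1
  have q3 := qw_pos 3
  have hg : ‖gl k t / qw k‖ ≤ Real.exp ((k:ℝ)^4) / qw k := by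
    have := qw_pos k
    rw [norm_div, Real.norm_eq_abs, Real.norm_eq_abs, abs_of_pos this]
    gcongr
    unfold gl
    rw [abs_mul, abs_of_pos (Real.exp_pos _)]
    calc _ ≤ 1 * Real.exp ((k:ℝ)^4) := by
          apply mul_le_mul (al_abs k) _ (Real.exp_pos _).le zero_le_one
          apply Real.exp_le_exp.2
          have : 0 ≤ (k:ℝ)^4 := by positivity
          nlinarith [le_max_right t 0]
      _ = _ := one_mul _
  have p1 : 0 < Real.exp 1 / qw 1 := by positivity
  have p3 : 0 < Real.exp 81 / qw 3 := by positivity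
  rcases al_cases k with h | h | h | h | h
  · have : gl k t = 0 := by simp [gl, h]
    rw [this]; simp; linarith
  all_goals
    subst h
    refine hg.trans ?_
    try rw [qw_neg]
    norm_num
    linarith

lemma gl_cont (k : ℤ) : Continuous (gl k) := by unfold gl; fun_prop

def gX : XX := BoundedContinuousFunction.ofNormedAddCommGroup
    (fun p : ℤ × ℝ => gl p.1 p.2 / qw p.1)
    (by
      rw [continuous_prod_of_discrete_left]
      intro k
      have h : Continuous fun t => gl k t / qw k := (gl_cont k).div_const (qw k)
      exact h)
    (Classical.choose gl_bd)
    (fun p => Classical.choose_spec gl_bd p.1 p.2)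

lemma gX_apply (k : ℤ) (t : ℝ) : gX (k,t) = gl k t / qw k := rfl

lemma gl_deriv (k : ℤ) {t : ℝ} (ht : 0 < t) : HasDerivAt (gl k) (-(k:ℝ)^4 * gl k t) t := by
  have hev : gl k =ᶠ[nhds t] fun u => al k * Real.exp (-(k:ℝ)^4 * (u - 1)) := by
    filter_upwards [lt_mem_nhds ht] with u hu
    unfold gl; rw [max_eq_left hu.le]
  have h1 : HasDerivAt (fun u : ℝ => -(k:ℝ)^4 * (u - 1)) (-(k:ℝ)^4) t := by
    simpa using ((hasDerivAt_id t).sub_const 1).const_mul (-(k:ℝ)^4)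
  refine ((h1.exp.const_mul (al k)).congr_of_eventuallyEq hev).congr_deriv ?_
  rw [hev.self_of_nhds]; ring

lemma Cs_gl (t x : ℝ) (ht : 0 < t) : Cs (fun k => gl k t) x =
    11/10 * (Real.exp (-(t-1)) * Real.cos x - 1/9 * Real.exp (-81*(t-1)) * Real.cos (3*x)) := by
  unfold Cs
  rw [tsum_eq_sum (s := {1,-1,3,-3})]
  · rw [Finset.sum_insert (by decide), Finset.sum_insert (by decide), Finset.sum_insert (by decide), Finset.sum_singleton]
    simp only [gl_neg]
    simp only [gl, al, max_eq_left ht.le]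
    push_cast
    rw [neg_mul 1 x, neg_mul 3 x, Real.cos_neg, Real.cos_neg]
    norm_num
    ring_nf
  · intro k hk
    rcases al_cases k with h | h | h | h | h
    · simp [gl, h]
    all_goals (subst h; simp at hk)

lemma lin_init (x : ℝ) : |Cs (fun k => gl k 1) x| ≤ 44/45 := by
  rw [Cs_gl 1 x one_pos, Real.cos_three_mul]
  simp only [sub_self, neg_zero, mul_zero, Real.exp_zero]
  have h1 := Real.cos_le_one x
  have h2 := Real.neg_one_le_cos x
  set c := Real.cos x
  rw [abs_le]
  constructor
  · nlinarith [mul_nonneg (sq_nonneg (c+1)) (by linarith : 0 ≤ 2 - c)]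
  · nlinarith [mul_nonneg (sq_nonneg (c-1)) (by linarith : 0 ≤ 2 + c)]

lemma lin_later : 102/100 < Cs (fun k => gl k (1+1/81)) 0 := by
  rw [Cs_gl _ 0 (by norm_num)]
  norm_num
  have h1 := Real.add_one_le_exp (-(1/81:ℝ))
  have h2 : Real.exp (-1) ≤ 1/2 := by
    rw [Real.exp_neg]
    have := Real.add_one_le_exp (1:ℝ)
    rw [inv_le_comm₀ (Real.exp_pos _) (by norm_num)]; linarith
  linarith

theorem core : ∃ ε₀ > 0, ∀ ε, 0 < ε → ε ≤ ε₀ → ∃ H : ℕ → ℝ × ℝ → ℝ,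
    (∀ m, ContDiffOn ℝ (⊤ : ℕ∞) (H m) (Ioi 0 ×ˢ univ)) ∧
    (∀ m t x, HasDerivAt (fun y => H m (t,y)) (H (m+1) (t,x)) x) ∧
    (∀ t x, 0 < t → HasDerivAt (fun s => H 0 (s,x))
      (-H 4 (t,x) + ε * (3 * H 1 (t,x)^2 * H 2 (t,x) - H 2 (t,x))) t) ∧
    (∀ t x, H 0 (t,-x) = - H 0 (t,x)) ∧
    (∀ t x (n : ℕ), H 0 (t, x + n * (2*π)) = H 0 (t,x)) ∧
    (∀ x, |H 1 (1,x)| ≤ 99/100) ∧ 101/100 ≤ H 1 (1+1/81, 0) := by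
  set R := ‖gX‖ + 1 with hR
  have hR0 : 0 ≤ R := by positivity
  set P := Cq^2*R^3+R with hP
  set Q := 3*Cq^2*R^2+1 with hQ
  set Z := ∑' k, qw k with hZ
  have hP0 : 0 ≤ P := by positivity
  have hQ0 : 0 < Q := by positivity
  have hZ0 : 0 ≤ Z := tsum_nonneg fun k => (qw_pos k).le
  refine ⟨min (1/(P+1)) (min (1/(2*Q)) (1/(100*(P*Z+1)))), by positivity, fun ε hε hle => ?_⟩
  have l1 : ε * P ≤ 1 := by
    have := hle.trans (min_le_left _ _)
    rw [le_div_iff₀ (by positivity)] at this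
    nlinarith
  have l2 : ε * Q ≤ 1/2 := by
    have := hle.trans ((min_le_right _ _).trans (min_le_left _ _))
    rw [le_div_iff₀ (by positivity)] at this
    nlinarith
  have l3 : ε * P * Z ≤ 1/100 := by
    have := hle.trans ((min_le_right _ _).trans (min_le_right _ _))
    rw [le_div_iff₀ (by positivity)] at this
    nlinarith
  obtain ⟨b, hbR, hbe, hb⟩ := exists_fix gX (fun k t => by rw [gX_apply, gX_apply, gl_neg, qw_neg]) ε hε.le R
    (by rw [← hP]; linarith) l2
  let a := cof b
  have ha : ∀ k t, |a k t| ≤ R * qw k := fun k t =>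
    (cof_bd b k t).trans (mul_le_mul_of_nonneg_right hbR (qw_pos k).le)
  have hae : ∀ k t, a (-k) t = a k t := fun k t => by simp only [a, cof, qw_neg, hbe]
  have hac : ∀ k, Continuous (a k) := cof_cont b
  have haeq : ∀ k t, a k t = gl k t - ε * (k:ℝ)^2 * Duh k (FF b k) t := fun k t => by
    have := (qw_pos k).ne'
    simp only [a, cof]
    rw [hb k t, gX_apply]; field_simp
  have ha0 : ∀ t, a 0 t = 0 := fun t => by
    rw [haeq]; simp [gl, al]
  have had : ∀ k t, 0 < t → HasDerivAt (a k) (-(k:ℝ)^4 * a k t - ε * (k:ℝ)^2 * FF b k t) t := by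
    intro k t ht
    have h := (gl_deriv k ht).sub ((Duh_deriv k (FF_cont b k) ht).const_mul (ε * (k:ℝ)^2))
    have e : a k = fun t => gl k t - ε * (k:ℝ)^2 * Duh k (FF b k) t := funext (haeq k)
    rw [haeq k t, e]
    refine h.congr_deriv ?_; ring
  let c : ℤ → ℝ → ℝ := fun k t => a k t / k
  have hca : ∀ (k : ℤ) t, (k:ℝ) * c k t = a k t := by
    intro k t
    by_cases hk : k = 0
    · subst hk; simp [ha0]
    · have : (k:ℝ) ≠ 0 := by exact_mod_cast hk
      simp only [c]; field_simp
  let c' : ℤ → ℝ → ℝ := fun k t => -(k:ℝ)^4 * c k t - ε * k * FF b k t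
  have hcc : ∀ k, Continuous (c k) := fun k => (hac k).div_const _
  have hc : ∀ k t, |c k t| ≤ R * qw k := by
    intro k t
    by_cases hk : k = 0
    · subst hk; simp only [c]; simp; exact mul_nonneg hR0 (qw_pos _).le
    · refine le_trans ?_ (ha k t)
      simp only [c]
      rw [abs_div]
      apply div_le_self (abs_nonneg _)
      have : (1:ℤ) ≤ |k| := Int.one_le_abs hk
      exact_mod_cast this
  have hcd : ∀ k t, 0 < t → HasDerivAt (c k) (c' k t) t := by
    intro k t ht
    refine ((had k t ht).div_const (k:ℝ)).congr_deriv ?_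
    simp only [c']
    by_cases hk : k = 0
    · subst hk; simp
    · have : (k:ℝ) ≠ 0 := by exact_mod_cast hk
      simp only [c]; field_simp
  have hF : ∀ k t, |FF b k t| ≤ P * qw k := fun k t => FF_bd b hbR k t
  have hc' : ∀ k t, |c' k t| ≤ |(k:ℝ)|^4 * (R * qw k) + |(k:ℝ)|^1 * ((ε * P) * qw k) := by
    intro k t
    simp only [c']
    refine (abs_sub _ _).trans ?_
    rw [abs_mul, abs_mul, abs_mul, abs_neg, abs_pow, abs_of_pos hε, pow_one]
    have h1 := mul_le_mul_of_nonneg_left (hc k t) (pow_nonneg (abs_nonneg (k:ℝ)) 4)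
    have h2 := mul_le_mul_of_nonneg_left (hF k t) (mul_nonneg hε.le (abs_nonneg (k:ℝ)))
    linarith
  have ru := rapid_q R
  have ru' := rapid_add (rapid_mul ru 4) (rapid_mul (rapid_q (ε*P)) 1)
  let N : ℤ → ℝ → ℝ := fun k t => NL (fun i => a i t) k
  have hN : ∀ k t, |N k t| ≤ (Cq^2*R^3) * qw k := fun k t => NL_bd (fun k => ha k t) k
  have rN := rapid_q (Cq^2*R^3)
  let H : ℕ → ℝ × ℝ → ℝ := fun m => W (-(π/2)) m c
  let G : ℕ → ℝ × ℝ → ℝ := fun m => W 0 m N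
  have hH1 : ∀ t x, H 1 (t,x) = Cs (fun k => a k t) x := by
    intro t x
    simp only [H, W, Cs]
    refine tsum_congr fun k => ?_
    rw [pow_one, hca]; congr 2; push_cast; ring
  have hG0 : ∀ p, G 0 p = H 1 p ^ 3 := by
    rintro ⟨t, x⟩
    rw [hH1, ← Cs_NL (fun k => ha k t) (fun k => hae k t)]
    simp only [G, W, Cs]
    refine tsum_congr fun k => ?_
    simp [N]
  have hHx : ∀ m t x, HasDerivAt (fun y => H m (t,y)) (H (m+1) (t,x)) x := fun m t x =>
    W_dx ru _ m (fun k => hc k t) x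
  have hGx : ∀ m t x, HasDerivAt (fun y => G m (t,y)) (G (m+1) (t,x)) x := fun m t x =>
    W_dx rN _ m (fun k => hN k t) x
  have hHt : ∀ m t x, 0 < t → HasDerivAt (fun s => H m (s,x)) (-H (m+4) (t,x) + ε * (G (m+1) (t,x) - H (m+2) (t,x))) t := by
    intro m t x ht
    refine (W_dt ru ru' (-(π/2)) m hc hc' hcd x ht).congr_deriv ?_
    have s1 := W_summ (p := (t,x)) ru (-(π/2)) (m+4) (fun k => hc k t)
    have s2 := W_summ (p := (t,x)) rN 0 (m+1) (fun k => hN k t)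
    have s3 := W_summ (p := (t,x)) ru (-(π/2)) (m+2) (fun k => hc k t)
    simp only [H, G, W]
    rw [← s2.tsum_sub s3, ← tsum_mul_left, ← tsum_neg, ← s1.neg.tsum_add ((s2.sub s3).mul_left ε)]
    refine tsum_congr fun k => ?_
    have e1 : (k:ℝ) * x + -(π/2) + (m+4:ℕ) * (π/2) = ((k:ℝ) * x + -(π/2) + m * (π/2)) + 2 * π := by push_cast; ring
    have e2 : (k:ℝ) * x + 0 + (m+1:ℕ) * (π/2) = ((k:ℝ) * x + -(π/2) + m * (π/2)) + π := by push_cast; ring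
    have e3 : (k:ℝ) * x + -(π/2) + (m+2:ℕ) * (π/2) = ((k:ℝ) * x + -(π/2) + m * (π/2)) + π := by push_cast; ring
    rw [e1, e2, e3, Real.cos_add_two_pi, Real.cos_add_pi]
    have e4 : FF b k t = N k t - a k t := rfl
    simp only [c']
    rw [e4, ← hca]
    ring
  have hclose : ∀ t x, |H 1 (t,x) - Cs (fun k => gl k t) x| ≤ 1/100 := by
    intro t x
    rw [hH1]
    have hd : ∀ k, |a k t - gl k t| ≤ (ε * P) * qw k := by
      intro k
      rw [haeq]
      have := Duh_bd k (fun s => hF k s) t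
      rw [show ∀ x y : ℝ, x - y - x = - y by intros; ring, abs_neg, abs_mul, abs_mul, abs_of_pos hε, abs_of_nonneg (sq_nonneg (k:ℝ))]
      have := mul_le_mul_of_nonneg_left this hε.le
      linarith
    have hg : ∀ k, |gl k t| ≤ ‖gX‖ * qw k := by
      intro k
      have := gX.norm_coe_le_norm (k,t)
      rwa [gX_apply, norm_div, Real.norm_eq_abs, Real.norm_eq_abs, abs_of_pos (qw_pos k), div_le_iff₀ (qw_pos k)] at this
    have s1 := (bd_summ (fun k => ha k t) (fun k => Real.cos (k*x)) (fun k => Real.abs_cos_le_one _)).of_norm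
    have s2 := (bd_summ hg (fun k => Real.cos (k*x)) (fun k => Real.abs_cos_le_one _)).of_norm
    unfold Cs
    rw [← s1.tsum_sub s2]
    have := tsum_of_norm_bounded (f := fun k : ℤ => a k t * Real.cos (k*x) - gl k t * Real.cos (k*x)) (summ_q0.mul_left (ε*P)).hasSum (fun k => by
      rw [← sub_mul, norm_mul, Real.norm_eq_abs, Real.norm_eq_abs]
      calc _ ≤ |a k t - gl k t| * 1 := by gcongr; exact Real.abs_cos_le_one _
        _ ≤ _ := by simpa using hd k)
    rw [Real.norm_eq_abs, tsum_mul_left] at this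
    exact this.trans l3
  refine ⟨H, smooth_of_system H G ε (fun m => W_cont ru _ m hc hcc) hHx hGx hG0 hHt, hHx, ?_, ?_, ?_, ?_, ?_⟩
  · intro t x ht
    refine (hHt 0 t x ht).congr_deriv ?_
    have : G 1 (t,x) = 3 * H 1 (t,x)^2 * H 2 (t,x) := by
      have h1 := hGx 0 t x
      have h2 := (hHx 1 t x).pow 3
      have e : (fun y => G 0 (t,y)) = (fun y => H 1 (t,y)) ^ 3 := by ext y; simp [hG0]
      rw [e] at h1
      have := h1.unique h2
      simpa using this
    simp only [zero_add, this]
  · intro t x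
    simp only [H, W]
    rw [← tsum_neg]
    refine tsum_congr fun k => ?_
    simp only [Nat.cast_zero, zero_mul, add_zero]
    rw [← sub_eq_add_neg, ← sub_eq_add_neg, Real.cos_sub_pi_div_two, Real.cos_sub_pi_div_two, mul_neg, Real.sin_neg]
    ring
  · intro t x n
    simp only [H, W]
    refine tsum_congr fun k => ?_
    congr 1
    rw [← Real.cos_add_int_mul_two_pi ((k:ℝ) * x + -(π/2) + (0:ℕ) * (π/2)) (k * n)]
    congr 1
    push_cast; ring
  · intro x
    have h1 := hclose 1 x
    have h2 := lin_init x
    rw [abs_le] at *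
    constructor <;> linarith
  · have h1 := hclose (1+1/81) 0
    have h2 := lin_later
    rw [abs_le] at h1
    linarith

lemma pd_comp {d : ℕ} (K : ℝ) (i0 : Fin d) {φ : ℝ → ℝ} {φ' : ℝ} (j : Fin d) (x : Ed d)
    (hφ : HasDerivAt φ φ' (K * x i0)) :
    pd (fun y : Ed d => φ (K * y i0)) j x = if j = i0 then K * φ' else 0 := by
  have h1 : HasFDerivAt (fun y : Ed d => K * y i0) (K • (EuclideanSpace.proj i0 : Ed d →L[ℝ] ℝ)) x :=
    ((EuclideanSpace.proj i0 : Ed d →L[ℝ] ℝ).hasFDerivAt).const_mul K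
  have h2 := hφ.comp_hasFDerivAt x h1
  unfold pd
  have h3 : fderiv ℝ (fun y : Ed d => φ (K * y i0)) x = φ' • (K • (EuclideanSpace.proj i0 : Ed d →L[ℝ] ℝ)) := h2.fderiv
  rw [h3]
  by_cases hj : j = i0
  · subst hj; simp; ring
  · simp [hj, Ne.symm hj]

/-- Corollary 1.6, disproving Conjecture 1 in dimension `d`: for every
`ν > 0` there exist smooth `2π`-periodic mean-zero initial data `h₀` with `‖∇h₀‖_∞ < 1`,
a time `t₀ > 0`, and a smooth `2π`-periodic classical solution `h` of
`∂_t h = ∇·((|∇h|²−1)∇h) − νΔ²h` on `[0,t₀] × 𝕋^d` with `h(0,·) = h₀` and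
`‖∇h(t₀,·)‖_∞ > 1`. -/
theorem stmt5 (d : ℕ) (hd : 1 ≤ d) (ν : ℝ) (hν : 0 < ν) :
    ∃ (h₀ : Ed d → ℝ) (t₀ : ℝ) (h : ℝ → Ed d → ℝ),
      ContDiff ℝ (⊤ : ℕ∞) h₀ ∧
      PeriodicSpace h₀ ∧
      (∫ x in Qd d, h₀ x) = 0 ∧
      (⨆ x : Ed d, gradNorm h₀ x) < 1 ∧
      0 < t₀ ∧
      (∀ t ∈ Icc 0 t₀, PeriodicSpace (h t)) ∧
      ContDiffOn ℝ (⊤ : ℕ∞) (fun p : ℝ × Ed d => h p.1 p.2) (Icc 0 t₀ ×ˢ univ) ∧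
      h 0 = h₀ ∧
      (∀ (x : Ed d), ∀ t ∈ Icc 0 t₀,
        HasDerivWithinAt (fun s => h s x)
          (slopeDiv (h t) x - ν * lapl (lapl (h t)) x) (Icc 0 t₀) t) ∧
      ∃ x : Ed d, 1 < gradNorm (h t₀) x := by
  obtain ⟨ε₀, hε₀, hcore⟩ := core
  obtain ⟨n, hn⟩ := exists_nat_gt (1 / (ν * ε₀))
  set K : ℕ := n + 1 with hKdef
  have hK1 : (1:ℝ) ≤ (K:ℝ) := by simp [hKdef]
  have hK0 : (0:ℝ) < (K:ℝ) := by linarith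
  have hεle : 1 / (ν * (K:ℝ)^2) ≤ ε₀ := by
    rw [div_lt_iff₀ (by positivity)] at hn
    rw [div_le_iff₀ (by positivity)]
    have h1 : (n:ℝ) ≤ (K:ℝ)^2 := by
      have : (K:ℝ) = n + 1 := by simp [hKdef]
      nlinarith [(Nat.cast_nonneg n : (0:ℝ) ≤ n)]
    have := mul_le_mul_of_nonneg_right h1 (mul_pos hν hε₀).le
    linarith
  obtain ⟨H, hsm, hHx, hHt, hodd, hper, hinit, hlater⟩ := hcore (1 / (ν * (K:ℝ)^2)) (by positivity) hεle
  let i0 : Fin d := ⟨0, hd⟩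
  let T : ℝ → ℝ := fun t => ν * (K:ℝ)^4 * t + 1
  let h : ℝ → Ed d → ℝ := fun t x => (K:ℝ)⁻¹ * H 0 (T t, K * x i0)
  have hT0 : T 0 = 1 := by simp [T]
  have hpd1 : ∀ t j, pd (h t) j = fun x => if j = i0 then H 1 (T t, K * x i0) else 0 := by
    intro t j
    ext x
    have := pd_comp (K:ℝ) i0 (φ := fun y => (K:ℝ)⁻¹ * H 0 (T t, y)) j x ((hHx 0 (T t) (K * x i0)).const_mul _)
    simp only [h]
    rw [this]
    split_ifs
    · simp only [zero_add]; field_simp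
    · rfl
  have hgsq : ∀ t, gradSq (h t) = fun x => H 1 (T t, K * x i0)^2 := by
    intro t
    ext x
    unfold gradSq
    simp only [hpd1]
    rw [Finset.sum_eq_single i0]
    · simp
    · intro j _ hj; simp [hj]
    · simp
  have hgn : ∀ t x, gradNorm (h t) x = |H 1 (T t, K * x i0)| := by
    intro t x
    unfold gradNorm; rw [hgsq, Real.sqrt_sq_eq_abs]
  have hlapH : ∀ t m (C : ℝ), lapl (fun x : Ed d => C * H m (T t, K * x i0)) = fun x => (C * (K:ℝ)^2) * H (m+2) (T t, K * x i0) := by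
    intro t m C
    ext x
    unfold lapl
    have e1 : ∀ j, pd (fun x : Ed d => C * H m (T t, K * x i0)) j = fun x => if j = i0 then K * (C * H (m+1) (T t, K * x i0)) else 0 := by
      intro j; ext x
      exact pd_comp (K:ℝ) i0 (φ := fun y => C * H m (T t, y)) j x ((hHx m (T t) (K * x i0)).const_mul _)
    simp only [e1]
    rw [Finset.sum_eq_single i0]
    · simp only [if_true]
      rw [pd_comp (K:ℝ) i0 (φ := fun y => K * (C * H (m+1) (T t, y))) i0 x (((hHx (m+1) (T t) (K * x i0)).const_mul C).const_mul _)]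
      simp only [if_true]; ring
    · intro j _ hj
      simp only [hj, if_false]
      simp [pd]
    · simp
  have hlap : ∀ t x, lapl (lapl (h t)) x = (K:ℝ)^3 * H 4 (T t, K * x i0) := by
    intro t x
    simp only [h]
    rw [hlapH, hlapH]
    simp only [zero_add]
    field_simp
  have hslope : ∀ t x, slopeDiv (h t) x = K * (3 * H 1 (T t, K * x i0)^2 * H 2 (T t, K * x i0) - H 2 (T t, K * x i0)) := by
    intro t x
    unfold slopeDiv
    simp only [hpd1, hgsq]
    rw [Finset.sum_eq_single i0]
    · simp only [if_true]
      have h1 := hHx 1 (T t) (K * x i0)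
      have h2 := ((h1.pow 2).sub_const 1).mul h1
      rw [pd_comp (K:ℝ) i0 (φ := fun y => (H 1 (T t, y)^2 - 1) * H 1 (T t, y)) i0 x h2]
      simp only [if_true]
      simp
      ring
    · intro j _ hj
      simp only [hj, if_false]
      simp [pd]
    · simp
  have hphi : ∀ t0 : ℝ, ContDiffOn ℝ (⊤ : ℕ∞) (fun p : ℝ × Ed d => h p.1 p.2) (Icc 0 t0 ×ˢ univ) := by
    intro t0
    have hmap : ContDiff ℝ (⊤ : ℕ∞) (fun p : ℝ × Ed d => ((T p.1, (K:ℝ) * p.2 i0) : ℝ × ℝ)) := by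
      have e : (fun p : ℝ × Ed d => ((T p.1, (K:ℝ) * p.2 i0) : ℝ × ℝ)) =
          fun p => (ν * (K:ℝ)^4 * p.1 + 1, (K:ℝ) * (EuclideanSpace.proj i0 : Ed d →L[ℝ] ℝ) p.2) := rfl
      rw [e]
      fun_prop
    have := (hsm 0).comp hmap.contDiffOn (s := Icc 0 t0 ×ˢ univ) (by
      rintro ⟨t, x⟩ ⟨ht, -⟩
      refine ⟨?_, mem_univ _⟩
      have := ht.1
      simp only [T, mem_Ioi]
      positivity)
    exact contDiffOn_const.mul this
  have hperiod : ∀ t, PeriodicSpace (h t) := by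
    intro t j x
    simp only [h]
    congr 1
    by_cases hj : j = i0
    · subst hj
      have : (K:ℝ) * (x + (2 * π) • EuclideanSpace.single i0 (1:ℝ)) i0 = K * x i0 + K * (2 * π) := by
        simp; ring
      rw [this, hper]
    · have : (x + (2 * π) • EuclideanSpace.single j (1:ℝ)) i0 = x i0 := by
        simp [Ne.symm hj]
      rw [this]
  refine ⟨h 0, 1 / (81 * ν * (K:ℝ)^4), h, ?_, hperiod 0, ?_, ?_, by positivity, fun t _ => hperiod t, hphi _, rfl, ?_, ?_⟩
  · have h1 := hphi 0
    have : ContDiffOn ℝ (⊤ : ℕ∞) (fun x : Ed d => h 0 x) univ :=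
      h1.comp (f := fun x : Ed d => ((0, x) : ℝ × Ed d)) (by fun_prop) (by intro x _; simp)
    exact contDiffOn_univ.1 this
  · have hQ : MeasurableSet (Qd d) := by
      have : Qd d = ⋂ i, {x : Ed d | |x i| ≤ π} := by ext x; simp [Qd]
      rw [this]
      refine MeasurableSet.iInter fun i => (isClosed_le ?_ continuous_const).measurableSet
      exact ((EuclideanSpace.proj i : Ed d →L[ℝ] ℝ).continuous).abs
    rw [← integral_indicator hQ]
    have h1 := integral_neg_eq_self ((Qd d).indicator (fun x => h 0 x)) volume
    have h2 : ∀ x, (Qd d).indicator (fun x => h 0 x) (-x) = - (Qd d).indicator (fun x => h 0 x) x := by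
      intro x
      have hm : -x ∈ Qd d ↔ x ∈ Qd d := by simp [Qd]
      by_cases hx : x ∈ Qd d
      · rw [indicator_of_mem hx, indicator_of_mem (hm.2 hx)]
        simp only [h]
        have : (K:ℝ) * (-x) i0 = -(K * x i0) := by simp
        rw [this, hodd]; ring
      · rw [indicator_of_notMem hx, indicator_of_notMem (fun h => hx (hm.1 h)), neg_zero]
    simp only [h2] at h1
    rw [integral_neg] at h1
    linarith
  · refine lt_of_le_of_lt (ciSup_le (c := 99/100) fun x => ?_) (by norm_num)
    rw [hgn, hT0]
    exact hinit _
  · intro x t ht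
    rw [hslope, hlap]
    have hTt : 0 < T t := by
      have := ht.1
      simp only [T]; positivity
    have hT : HasDerivAt T (ν * (K:ℝ)^4) t := by
      have h0 := ((hasDerivAt_id t).const_mul (ν * (K:ℝ)^4)).add_const 1
      rw [mul_one] at h0
      exact h0
    have h1 := ((hHt (T t) (K * x i0) hTt).comp t hT).const_mul ((K:ℝ)⁻¹)
    refine HasDerivAt.hasDerivWithinAt (h1.congr_deriv ?_)
    field_simp
    ring
  · refine ⟨0, ?_⟩
    rw [hgn]
    have e1 : T (1 / (81 * ν * (K:ℝ)^4)) = 1 + 1/81 := by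
      simp only [T]; field_simp; ring
    have e2 : (K:ℝ) * (0 : Ed d) i0 = 0 := by simp
    rw [e1, e2]
    exact lt_of_lt_of_le (by linarith) (le_abs_self _)
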